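/- Let w be a nonempty word over an alphabet A such that the greatest common divisor of the numbers of occurrences of the letters of A in w equals 1, i.e. gcd({|w|_a : a ∈ A}) = 1. Then w avoids abelian |w|-powers cyclically. -/

import Mathlib

/-- `u` is an abelian `N`-power of period `m`: a concatenation of `N` nonempty
pairwise abelian-equivalent words of common length `m`. -/
def IsAbelianPower {α : Type*} (N m : ℕ) (u : List α) : Prop :=
  0 < m ∧ ∃ f : Fin N → List α,
    u = (List.ofFn f).flatten ∧ (∀ i, (f i).length = m) ∧ ∀ i j, List.Perm (f i) (f j)

/-- `u` occurs in the infinite word `w^ω`, i.e. `u` is a factor of `w^k` for some `k`. -/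
def OccursCyc {α : Type*} (w u : List α) : Prop :=
  ∃ k : ℕ, u <:+: (List.replicate k w).flatten

/-- `w` avoids abelian `N`-powers cyclically: every abelian `N`-power of period `m`
occurring in `w^ω` satisfies `m ≥ |w|`. -/
def AvoidsAbelianCyc {α : Type*} (N : ℕ) (w : List α) : Prop :=
  ∀ m u, IsAbelianPower N m u → OccursCyc w u → w.length ≤ m

/-!
Let `u` be an abelian `|w|`-power of period `m` occurring in `w^ω`. Its length is `m|w|`, and every
factor of `w^ω` of that length is a rearrangement of `w^m`; hence `|u|_a = m|w|_a` for each letter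
`a`. The `|w|` blocks of `u` all contain `a` equally often, so `|w|` divides `m|w|_a`. Since the
numbers `|w|_a` have greatest common divisor `1`, it follows that `|w|` divides `m`.
-/

section

variable {α : Type*} {w u : List α} {N m n : ℕ}

namespace IsAbelianPower

theorem length_eq (hu : IsAbelianPower N m u) : u.length = N * m := by
  obtain ⟨-, f, rfl, hlen, -⟩ := hu
  simp [List.length_flatten, List.map_ofFn, List.sum_ofFn, hlen]

theorem dvd_count [DecidableEq α] (hu : IsAbelianPower N m u) (a : α) : N ∣ u.count a := by
  obtain ⟨-, f, rfl, -, hperm⟩ := hu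
  rcases N.eq_zero_or_pos with rfl | hN
  · simp
  · have hcount (i : Fin N) : (f i).count a = (f ⟨0, hN⟩).count a := (hperm i _).count_eq a
    simp [List.count_flatten, List.map_ofFn, List.sum_ofFn, hcount]

end IsAbelianPower

/- If `s ++ u` is a prefix of `w^ω` and `|u| = n|w|`, then `s ++ u` and `w^n ++ s` are prefixes of
`w^ω` of equal length, hence equal; cancelling `s` gives the claim. -/
theorem OccursCyc.perm_flatten_replicate (hu : OccursCyc w u) (hlen : u.length = n * w.length) :
    u.Perm (List.replicate n w).flatten := by
  obtain ⟨k, s, t, hst⟩ := hu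
  have hs : s <+: (List.replicate k w).flatten := ⟨u ++ t, by rw [← hst, List.append_assoc]⟩
  have hsu_prefix : s ++ u <+: (List.replicate (n + k) w).flatten := by
    rw [add_comm, List.replicate_add, List.flatten_append]
    exact List.IsPrefix.trans ⟨t, hst⟩ (List.prefix_append _ _)
  have hws_prefix : (List.replicate n w).flatten ++ s <+: (List.replicate (n + k) w).flatten := by
    rw [List.replicate_add, List.flatten_append]
    exact (List.prefix_append_right_inj _).mpr hs
  have hlength : (s ++ u).length = ((List.replicate n w).flatten ++ s).length := by
    simp [hlen, add_comm]
  have heq : s ++ u = (List.replicate n w).flatten ++ s :=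
    (List.prefix_of_prefix_length_le hsu_prefix hws_prefix hlength.le).eq_of_length hlength
  rw [← List.perm_append_left_iff s, heq]
  exact List.perm_append_comm

theorem OccursCyc.count_eq [DecidableEq α] (hu : OccursCyc w u)
    (hlen : u.length = n * w.length) (a : α) : u.count a = n * w.count a := by
  rw [(hu.perm_flatten_replicate hlen).count_eq a]
  simp [List.count_flatten]

theorem IsAbelianPower.dvd_mul_gcd_count [DecidableEq α] (hu : IsAbelianPower N m u)
    (hocc : OccursCyc w u) (hlen : N * m = n * w.length) (s : Finset α) :
    N ∣ n * s.gcd (fun a => w.count a) := by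
  have hdvd (a : α) : N ∣ n * w.count a :=
    hocc.count_eq (hu.length_eq.trans hlen) a ▸ hu.dvd_count a
  simpa [Finset.gcd_mul_left] using Finset.dvd_gcd fun a (_ : a ∈ s) => hdvd a

end

theorem gcd_one_avoids_abelian_length_powers_cyclically_general
    {α : Type*} [DecidableEq α] (w : List α) (s : Finset α)
    (hgcd : s.gcd (fun a => w.count a) = 1) :
    AvoidsAbelianCyc w.length w := by
  intro m u hu hocc
  have hdvd : w.length ∣ m * s.gcd (fun a => w.count a) :=
    hu.dvd_mul_gcd_count hocc (mul_comm _ _) s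
  rw [hgcd, mul_one] at hdvd
  exact Nat.le_of_dvd hu.1 hdvd

theorem gcd_one_avoids_abelian_length_powers_cyclically
    {α : Type*} [Fintype α] [DecidableEq α] (w : List α) (hw : w ≠ [])
    (hgcd : Finset.univ.gcd (fun a => w.count a) = 1) :
    AvoidsAbelianCyc w.length w :=
  gcd_one_avoids_abelian_length_powers_cyclically_general w Finset.univ hgcd
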